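/- Fix positive reals λ₁, λ₂. Then as (x₁,x₂) tends to (0,0) from within the positive quadrant (with x₁, x₂ small enough that λ₁x₁ + λ₂x₂ < 1 and x₁, x₂ ≤ 1), the correlation function Ψ(x₁, x₂; λ₁x₁, λ₂x₂) tends to binom(λ₁+λ₂, λ₁)⁻¹, where binom denotes the generalized binomial coefficient. -/

import Mathlib

open MeasureTheory Real Filter Topology

noncomputable def betaFn (a b : ℝ) : ℝ := Real.Gamma a * Real.Gamma b / Real.Gamma (a + b)

noncomputable def incBeta (z a b : ℝ) : ℝ := ∫ t in (0:ℝ)..z, t ^ (a - 1) * (1 - t) ^ (b - 1)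

noncomputable def regIncBeta (z a b : ℝ) : ℝ := incBeta z a b / betaFn a b

noncomputable def mvBeta (ρ₁ ρ₂ ρ₀ : ℝ) : ℝ :=
  Real.Gamma ρ₁ * Real.Gamma ρ₂ * Real.Gamma ρ₀ / Real.Gamma (ρ₁ + ρ₂ + ρ₀)

noncomputable def genBinom (x y : ℝ) : ℝ :=
  Real.Gamma (x + 1) / (Real.Gamma (y + 1) * Real.Gamma (x - y + 1))

noncomputable def Psi (x₁ x₂ ρ₁ ρ₂ : ℝ) : ℝ :=
  (x₁ * x₂)⁻¹ * (mvBeta ρ₁ ρ₂ (1 - ρ₁ - ρ₂))⁻¹ *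
    ∫ p in {p : ℝ × ℝ | 0 ≤ p.1 ∧ 0 ≤ p.2 ∧ p.1 + p.2 ≤ 1},
      regIncBeta p.1 ρ₁ (1 - ρ₁) ^ (1 / x₁ - 1) *
        regIncBeta p.2 ρ₂ (1 - ρ₂) ^ (1 / x₂ - 1) *
        p.1 ^ (ρ₁ - 1) * p.2 ^ (ρ₂ - 1) * (1 - p.1 - p.2) ^ (-ρ₁ - ρ₂)


lemma betaFn_pos' {a b : ℝ} (ha : 0 < a) (hb : 0 < b) : 0 < betaFn a b :=
  ProbabilityTheory.beta_pos ha hb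

lemma beta_scaled {a b s : ℝ} (ha : 0 < a) (hb : 0 < b) (hs : 0 < s) :
    ∫ y in (0:ℝ)..s, y ^ (a - 1) * (s - y) ^ (b - 1) = s ^ (a + b - 1) * betaFn a b := by
  have h := Complex.betaIntegral_scaled (a : ℂ) (b : ℂ) hs
  rw [Complex.betaIntegral_eq_Gamma_mul_div _ _ (by simpa using ha) (by simpa using hb)] at h
  have h1 : ∫ x in (0:ℝ)..s, (x : ℂ) ^ ((a : ℂ) - 1) * ((s : ℂ) - x) ^ ((b : ℂ) - 1)
      = ((∫ y in (0:ℝ)..s, y ^ (a - 1) * (s - y) ^ (b - 1) : ℝ) : ℂ) := by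
    rw [← intervalIntegral.integral_ofReal]
    apply intervalIntegral.integral_congr
    intro x hx
    rw [Set.uIcc_of_le hs.le] at hx
    simp only
    push_cast
    rw [Complex.ofReal_cpow hx.1, Complex.ofReal_cpow (by linarith [hx.2])]
    push_cast
    rfl
  rw [h1] at h
  apply Complex.ofReal_injective
  rw [h, betaFn]
  push_cast
  rw [Complex.ofReal_cpow hs.le, ← Complex.Gamma_ofReal, ← Complex.Gamma_ofReal,
    ← Complex.Gamma_ofReal]
  push_cast
  rfl

lemma beta_scaled_int {a b s : ℝ} (ha : 0 < a) (hb : 0 < b) (hs : 0 < s) :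
    IntervalIntegrable (fun y : ℝ => y ^ (a - 1) * (s - y) ^ (b - 1)) volume 0 s := by
  by_contra h
  have h1 := intervalIntegral.integral_undef h
  rw [beta_scaled ha hb hs] at h1
  have := mul_pos (Real.rpow_pos_of_pos hs (a + b - 1)) (betaFn_pos' ha hb)
  linarith

lemma betaFn_one_sub {r : ℝ} : betaFn r (1 - r) = π / Real.sin (π * r) := by
  rw [betaFn, Real.Gamma_mul_Gamma_one_sub]; simp

lemma incBeta_int {r t : ℝ} (hr : 0 < r) (hr1 : r < 1) (ht : 0 ≤ t) (ht1 : t ≤ 1) :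
    IntervalIntegrable (fun s : ℝ => s ^ (r - 1) * (1 - s) ^ (1 - r - 1)) volume 0 t := by
  refine (beta_scaled_int hr (by linarith : 0 < 1 - r) one_pos).mono_set ?_
  rw [Set.uIcc_of_le ht, Set.uIcc_of_le zero_le_one]
  exact Set.Icc_subset_Icc le_rfl ht1

lemma regIncBeta_le {r t : ℝ} (hr : 0 < r) (hr1 : r < 1) (ht : 0 < t) (ht1 : t ≤ 1) :
    regIncBeta t r (1 - r) ≤ t ^ r := by
  have hB := betaFn_pos' hr (by linarith : 0 < 1 - r)
  rw [regIncBeta, div_le_iff₀ hB, incBeta]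
  have hsub := intervalIntegral.integral_comp_mul_left (a := 0) (b := 1)
    (fun s : ℝ => s ^ (r - 1) * (1 - s) ^ (1 - r - 1)) ht.ne'
  simp only [mul_zero, mul_one, smul_eq_mul] at hsub
  have h2 := beta_scaled hr (by linarith : 0 < 1 - r) one_pos
  have hi := incBeta_int hr hr1 ht.le ht1
  have hi2 := beta_scaled_int hr (by linarith : 0 < 1 - r) one_pos
  have hmono : ∫ u in (0:ℝ)..1, (t * u) ^ (r - 1) * (1 - t * u) ^ (1 - r - 1) ≤
      ∫ u in (0:ℝ)..1, t ^ (r - 1) * (u ^ (r - 1) * (1 - u) ^ (1 - r - 1)) := by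
    apply intervalIntegral.integral_mono_on_of_le_Ioo zero_le_one
    · have := hi.comp_mul_left (c := t)
      simpa [ht.ne'] using this
    · exact hi2.const_mul _
    · intro u hu
      rw [Real.mul_rpow ht.le hu.1.le, mul_assoc]
      have : t * u ≤ u := by nlinarith [hu.1]
      gcongr ?_ * (?_ * ?_)
      · exact Real.rpow_nonneg hu.1.le _
      · exact Real.rpow_le_rpow_of_nonpos (by linarith [hu.2]) (by linarith) (by linarith)
  rw [intervalIntegral.integral_const_mul, h2, hsub] at hmono
  have e : t ^ r = t * t ^ (r - 1) := by
    rw [← Real.rpow_one_add' ht.le (by linarith)]; congr 1; ring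
  rw [e]
  have := mul_le_mul_of_nonneg_left hmono ht.le
  rw [← mul_assoc, mul_inv_cancel₀ ht.ne', one_mul, Real.one_rpow, one_mul] at this
  linarith

lemma le_regIncBeta {r t : ℝ} (hr : 0 < r) (hr1 : r < 1) (ht : 0 < t) (ht1 : t ≤ 1) :
    t ^ r * (Real.sin (π * r) / (π * r)) ≤ regIncBeta t r (1 - r) := by
  have hB := betaFn_pos' hr (by linarith : 0 < 1 - r)
  have hi := incBeta_int hr hr1 ht.le ht1
  have hmono : ∫ s in (0:ℝ)..t, s ^ (r - 1) ≤ incBeta t r (1 - r) := by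
    apply intervalIntegral.integral_mono_on_of_le_Ioo ht.le
    · exact intervalIntegral.intervalIntegrable_rpow' (by linarith)
    · exact hi
    · intro u hu
      have : 1 ≤ (1 - u) ^ (1 - r - 1) := 
        Real.one_le_rpow_of_pos_of_le_one_of_nonpos (by linarith [hu.2]) (by linarith [hu.1])
          (by linarith)
      exact le_mul_of_one_le_right (Real.rpow_nonneg hu.1.le _) this
  rw [integral_rpow (Or.inl (by linarith))] at hmono
  simp only [sub_add_cancel, Real.zero_rpow hr.ne', sub_zero] at hmono
  rw [regIncBeta, betaFn_one_sub]
  rw [betaFn_one_sub] at hB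
  have hs : 0 < Real.sin (π * r) := by
    by_contra h
    have := div_nonpos_of_nonneg_of_nonpos Real.pi_pos.le (not_lt.1 h)
    linarith
  rw [div_div_eq_mul_div, le_div_iff₀ Real.pi_pos]
  have := mul_le_mul_of_nonneg_right hmono hs.le
  calc _ = t ^ r / r * Real.sin (π * r) := by field_simp
    _ ≤ _ := this

lemma F_le {x l t : ℝ} (hx : 0 < x) (hx2 : x ≤ 1/2) (hl : 0 < l) (hr1 : l * x < 1)
    (ht : 0 < t) (ht1 : t ≤ 1) :
    regIncBeta t (l * x) (1 - l * x) ^ (1 / x - 1) * t ^ (l * x - 1) ≤ t ^ (l - 1) := by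
  have hr : 0 < l * x := by positivity
  have h0 : 0 ≤ regIncBeta t (l * x) (1 - l * x) := by
    refine le_trans ?_ (le_regIncBeta hr hr1 ht ht1)
    have := Real.sin_nonneg_of_nonneg_of_le_pi (x := π * (l * x)) (by positivity)
      (by nlinarith [Real.pi_pos])
    positivity
  have hn : 0 ≤ 1 / x - 1 := by rw [sub_nonneg, le_div_iff₀ hx]; linarith
  have := Real.rpow_le_rpow h0 (regIncBeta_le hr hr1 ht ht1) hn
  rw [← Real.rpow_mul ht.le] at this
  calc _ ≤ t ^ ((l * x) * (1 / x - 1)) * t ^ (l * x - 1) := by gcongr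
    _ = _ := by
      rw [← Real.rpow_add ht]; congr 1; field_simp; ring

lemma le_F {x l t : ℝ} (hx : 0 < x) (hx2 : x ≤ 1/2) (hl : 0 < l) (hr1 : l * x < 1)
    (hk : (π * l) ^ 2 * x ≤ 1) (ht : 0 < t) (ht1 : t ≤ 1) :
    (1 - (π * l) ^ 2 * x) * t ^ (l - 1) ≤
      regIncBeta t (l * x) (1 - l * x) ^ (1 / x - 1) * t ^ (l * x - 1) := by
  have hr : 0 < l * x := by positivity
  have hpr : 0 < π * (l * x) := by positivity
  have hn : 1 ≤ 1 / x - 1 := by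
    have : 2 ≤ 1 / x := by rw [le_div_iff₀ hx]; linarith
    linarith
  have hsin := Real.sin_gt_sub_cube hpr
  have hq : (π * (l * x)) ^ 2 = (π * l) ^ 2 * x * x := by ring
  have hq1 : (π * (l * x)) ^ 2 ≤ 1 := by rw [hq]; nlinarith
  have h1 : 1 + -((π * (l * x)) ^ 2 / 6) ≤ Real.sin (π * (l * x)) / (π * (l * x)) := by
    rw [le_div_iff₀ hpr]
    nlinarith
  have hb := one_add_mul_self_le_rpow_one_add (s := -((π * (l * x)) ^ 2 / 6)) (by linarith) hn
  have h0 : 0 ≤ 1 + -((π * (l * x)) ^ 2 / 6) := by linarith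
  have h2 : 1 - (π * l) ^ 2 * x ≤ (1 + -((π * (l * x)) ^ 2 / 6)) ^ (1 / x - 1) := by
    refine le_trans ?_ hb
    rw [hq]
    have e : (1 / x - 1) * -((π * l) ^ 2 * x * x / 6) = -((π * l) ^ 2 * x / 6) * (1 - x) := by
      field_simp
    rw [e]
    have : 0 ≤ (π * l) ^ 2 * x := by positivity
    nlinarith
  have h3 : t ^ (l * x) * (1 + -((π * (l * x)) ^ 2 / 6)) ≤ regIncBeta t (l * x) (1 - l * x) := by
    refine le_trans ?_ (le_regIncBeta hr hr1 ht ht1)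
    gcongr
  have h4 := Real.rpow_le_rpow (by positivity) h3 (by linarith : 0 ≤ 1 / x - 1)
  rw [Real.mul_rpow (by positivity) h0, ← Real.rpow_mul ht.le] at h4
  calc _ = t ^ ((l * x) * (1 / x - 1)) * (1 - (π * l) ^ 2 * x) * t ^ (l * x - 1) := by
        rw [mul_right_comm, ← Real.rpow_add ht, mul_comm]; congr 2; field_simp; ring
    _ ≤ t ^ ((l * x) * (1 / x - 1)) * (1 + -((π * (l * x)) ^ 2 / 6)) ^ (1 / x - 1)
          * t ^ (l * x - 1) := by gcongr
    _ ≤ _ := by gcongr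

def simplexSet : Set (ℝ × ℝ) := {p : ℝ × ℝ | 0 ≤ p.1 ∧ 0 ≤ p.2 ∧ p.1 + p.2 ≤ 1}

lemma simplexSet_closed : IsClosed simplexSet := by
  have h1 : IsClosed {p : ℝ × ℝ | 0 ≤ p.1} := isClosed_le (by fun_prop) (by fun_prop)
  have h2 : IsClosed {p : ℝ × ℝ | 0 ≤ p.2} := isClosed_le (by fun_prop) (by fun_prop)
  have h3 : IsClosed {p : ℝ × ℝ | p.1 + p.2 ≤ 1} := isClosed_le (by fun_prop) (by fun_prop)
  exact h1.inter (h2.inter h3)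

noncomputable def dirG (a b c : ℝ) (p : ℝ × ℝ) : ℝ :=
  p.1 ^ (a - 1) * p.2 ^ (b - 1) * (1 - p.1 - p.2) ^ (c - 1)

lemma dirG_meas (a b c : ℝ) : Measurable (dirG a b c) := by
  unfold dirG; fun_prop

lemma dirG_nonneg (a b c : ℝ) {p : ℝ × ℝ} (hp : p ∈ simplexSet) : 0 ≤ dirG a b c p := by
  obtain ⟨h1, h2, h3⟩ := hp
  exact mul_nonneg (mul_nonneg (Real.rpow_nonneg h1 _) (Real.rpow_nonneg h2 _))
    (Real.rpow_nonneg (by linarith) _)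

lemma dir_section {a b c x : ℝ} (hx : x ∈ Set.Ioo (0:ℝ) 1) :
    (fun y => simplexSet.indicator (dirG a b c) (x, y)) =
      (Set.Icc 0 (1 - x)).indicator
        (fun y => x ^ (a - 1) * (y ^ (b - 1) * ((1 - x) - y) ^ (c - 1))) := by
  ext y
  have : (x, y) ∈ simplexSet ↔ y ∈ Set.Icc 0 (1 - x) := by
    simp only [simplexSet, Set.mem_ofPred_eq, Set.mem_Icc]
    constructor
    · rintro ⟨_, h, h'⟩; exact ⟨h, by linarith⟩
    · rintro ⟨h, h'⟩; exact ⟨hx.1.le, h, by linarith⟩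
  by_cases h : y ∈ Set.Icc 0 (1 - x)
  · rw [Set.indicator_of_mem h, Set.indicator_of_mem (this.2 h), dirG, mul_assoc]
  · rw [Set.indicator_of_notMem h, Set.indicator_of_notMem (fun h' => h (this.1 h'))]

lemma dir_section_out {a b c x : ℝ} (hx : x ∉ Set.Icc (0:ℝ) 1) :
    (fun y => simplexSet.indicator (dirG a b c) (x, y)) = fun _ => 0 := by
  ext y
  rw [Set.indicator_of_notMem]
  rintro ⟨h1, h2, h3⟩
  exact hx ⟨h1, by simp only at h1 h2 h3; linarith⟩

lemma ae_cases : ∀ᵐ x : ℝ, x ∈ Set.Ioo (0:ℝ) 1 ∨ x ∉ Set.Icc (0:ℝ) 1 := by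
  have h0 : ∀ᵐ x : ℝ, x ≠ 0 := by simp [ae_iff]
  have h1 : ∀ᵐ x : ℝ, x ≠ 1 := by simp [ae_iff]
  filter_upwards [h0, h1] with x h0 h1
  by_cases h : x ∈ Set.Icc (0:ℝ) 1
  · exact Or.inl ⟨lt_of_le_of_ne h.1 h0.symm, lt_of_le_of_ne h.2 h1⟩
  · exact Or.inr h

lemma dir_inner {a b c : ℝ} (hb : 0 < b) (hc : 0 < c) :
    (fun x => ∫ y, simplexSet.indicator (dirG a b c) (x, y)) =ᵐ[volume]
      (Set.Ioc (0:ℝ) 1).indicator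
        (fun x => (x ^ (a - 1) * (1 - x) ^ (b + c - 1)) * betaFn b c) := by
  filter_upwards [ae_cases] with x hx
  rcases hx with hx | hx
  · rw [dir_section hx, Set.indicator_of_mem (show x ∈ Set.Ioc (0:ℝ) 1 from ⟨hx.1, hx.2.le⟩),
      integral_indicator measurableSet_Icc, integral_Icc_eq_integral_Ioc,
      ← intervalIntegral.integral_of_le (by linarith [hx.2]),
      intervalIntegral.integral_const_mul, beta_scaled hb hc (by linarith [hx.2])]
    ring
  · rw [dir_section_out hx, Set.indicator_of_notMem (fun h => hx ⟨h.1.le, h.2⟩)]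
    simp

lemma dir_integrable {a b c : ℝ} (ha : 0 < a) (hb : 0 < b) (hc : 0 < c) :
    Integrable (simplexSet.indicator (dirG a b c)) := by
  have hm : Measurable (simplexSet.indicator (dirG a b c)) :=
    (dirG_meas a b c).indicator simplexSet_closed.measurableSet
  rw [Measure.volume_eq_prod, integrable_prod_iff hm.aestronglyMeasurable]
  constructor
  · filter_upwards [ae_cases] with x hx
    rcases hx with hx | hx
    · rw [dir_section hx, integrable_indicator_iff measurableSet_Icc,
        ← intervalIntegrable_iff_integrableOn_Icc_of_le (by linarith [hx.2])]
      exact (beta_scaled_int hb hc (by linarith [hx.2])).const_mul _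
    · rw [dir_section_out hx]; exact integrable_zero _ _ _
  · have hn : ∀ p, ‖simplexSet.indicator (dirG a b c) p‖ = simplexSet.indicator (dirG a b c) p :=
      fun p => Real.norm_of_nonneg (Set.indicator_nonneg (fun p hp => dirG_nonneg a b c hp) p)
    simp_rw [hn]
    rw [integrable_congr (dir_inner hb hc), integrable_indicator_iff measurableSet_Ioc,
      ← intervalIntegrable_iff_integrableOn_Ioc_of_le zero_le_one]
    exact (beta_scaled_int ha (by linarith : 0 < b + c) one_pos).mul_const _

lemma dir_integral {a b c : ℝ} (ha : 0 < a) (hb : 0 < b) (hc : 0 < c) :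
    ∫ p in simplexSet, dirG a b c p =
      Real.Gamma a * Real.Gamma b * Real.Gamma c / Real.Gamma (a + b + c) := by
  rw [← integral_indicator simplexSet_closed.measurableSet]
  have hi := dir_integrable ha hb hc
  rw [Measure.volume_eq_prod] at hi ⊢
  rw [integral_prod _ hi, integral_congr_ae (dir_inner hb hc),
    integral_indicator measurableSet_Ioc, ← intervalIntegral.integral_of_le zero_le_one,
    intervalIntegral.integral_mul_const, beta_scaled ha (by linarith : 0 < b + c) one_pos,
    Real.one_rpow, one_mul, betaFn, betaFn, ← add_assoc]
  have := (Real.Gamma_pos_of_pos (by linarith : 0 < b + c)).ne'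
  have := (Real.Gamma_pos_of_pos (by linarith : 0 < a + b + c)).ne'
  field_simp

lemma ae_pos : ∀ᵐ p : ℝ × ℝ ∂(volume.restrict simplexSet),
    p ∈ simplexSet ∧ 0 < p.1 ∧ 0 < p.2 := by
  have h1 : ∀ᵐ p : ℝ × ℝ, p.1 ≠ 0 := by
    rw [Measure.volume_eq_prod]
    exact Measure.quasiMeasurePreserving_fst.ae (by simp [ae_iff] : ∀ᵐ x : ℝ, x ≠ 0)
  have h2 : ∀ᵐ p : ℝ × ℝ, p.2 ≠ 0 := by
    rw [Measure.volume_eq_prod]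
    exact Measure.quasiMeasurePreserving_snd.ae (by simp [ae_iff] : ∀ᵐ x : ℝ, x ≠ 0)
  filter_upwards [ae_restrict_mem simplexSet_closed.measurableSet, ae_restrict_of_ae h1,
    ae_restrict_of_ae h2] with p hp h1 h2
  exact ⟨hp, lt_of_le_of_ne hp.1 h1.symm, lt_of_le_of_ne hp.2.1 h2.symm⟩

noncomputable def psiF (x l t : ℝ) : ℝ :=
  regIncBeta t (l * x) (1 - l * x) ^ (1 / x - 1) * t ^ (l * x - 1)

lemma psiF_meas {x l : ℝ} (hx : 0 < x) (hl : 0 < l) (hr1 : l * x < 1) {f : ℝ × ℝ → ℝ}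
    (hf : Continuous f) (hmaps : Set.MapsTo f simplexSet (Set.Icc 0 1)) :
    AEMeasurable (fun p => psiF x l (f p)) (volume.restrict simplexSet) := by
  have hr : 0 < l * x := by positivity
  have hc : ContinuousOn (fun t => regIncBeta t (l * x) (1 - l * x)) (Set.Icc 0 1) := by
    unfold regIncBeta incBeta
    refine ContinuousOn.div_const ?_ _
    have := intervalIntegral.continuousOn_primitive_interval
      (μ := volume) (a := (0:ℝ)) (b := 1)
      (f := fun s : ℝ => s ^ (l * x - 1) * (1 - s) ^ (1 - l * x - 1)) (by
        rw [Set.uIcc_of_le zero_le_one, ← intervalIntegrable_iff_integrableOn_Icc_of_le zero_le_one]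
        exact incBeta_int hr hr1 zero_le_one le_rfl)
    rwa [Set.uIcc_of_le zero_le_one] at this
  have h1 : AEMeasurable (fun p => regIncBeta (f p) (l * x) (1 - l * x))
      (volume.restrict simplexSet) :=
    (hc.comp hf.continuousOn hmaps).aemeasurable simplexSet_closed.measurableSet
  have := hf.measurable
  exact (h1.pow_const _).mul (by fun_prop)

lemma psi_integral_bounds {x₁ x₂ l₁ l₂ : ℝ} (hx₁ : 0 < x₁) (hx₁' : x₁ ≤ 1/2) (hx₂ : 0 < x₂)
    (hx₂' : x₂ ≤ 1/2) (hl₁ : 0 < l₁) (hl₂ : 0 < l₂) (hr : l₁ * x₁ + l₂ * x₂ < 1)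
    (hk₁ : (π * l₁) ^ 2 * x₁ ≤ 1) (hk₂ : (π * l₂) ^ 2 * x₂ ≤ 1) :
    ((1 - (π * l₁) ^ 2 * x₁) * (1 - (π * l₂) ^ 2 * x₂)) *
        (∫ p in simplexSet, dirG l₁ l₂ (1 - l₁ * x₁ - l₂ * x₂) p) ≤
      ∫ p in simplexSet, psiF x₁ l₁ p.1 * psiF x₂ l₂ p.2 *
        (1 - p.1 - p.2) ^ (-(l₁ * x₁) - l₂ * x₂) ∧
    ∫ p in simplexSet, psiF x₁ l₁ p.1 * psiF x₂ l₂ p.2 *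
        (1 - p.1 - p.2) ^ (-(l₁ * x₁) - l₂ * x₂) ≤
      ∫ p in simplexSet, dirG l₁ l₂ (1 - l₁ * x₁ - l₂ * x₂) p := by
  have hp1 : 0 < l₁ * x₁ := by positivity
  have hp2 : 0 < l₂ * x₂ := by positivity
  have hg : IntegrableOn (dirG l₁ l₂ (1 - l₁ * x₁ - l₂ * x₂)) simplexSet := by
    rw [← integrable_indicator_iff simplexSet_closed.measurableSet]
    exact dir_integrable hl₁ hl₂ (by linarith)
  have e : 1 - l₁ * x₁ - l₂ * x₂ - 1 = -(l₁ * x₁) - l₂ * x₂ := by ring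
  have key : ∀ᵐ p : ℝ × ℝ ∂(volume.restrict simplexSet),
      ((1 - (π * l₁) ^ 2 * x₁) * (1 - (π * l₂) ^ 2 * x₂)) *
          dirG l₁ l₂ (1 - l₁ * x₁ - l₂ * x₂) p ≤
        psiF x₁ l₁ p.1 * psiF x₂ l₂ p.2 * (1 - p.1 - p.2) ^ (-(l₁ * x₁) - l₂ * x₂) ∧
      psiF x₁ l₁ p.1 * psiF x₂ l₂ p.2 * (1 - p.1 - p.2) ^ (-(l₁ * x₁) - l₂ * x₂) ≤
        dirG l₁ l₂ (1 - l₁ * x₁ - l₂ * x₂) p := by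
    filter_upwards [ae_pos] with p hp
    obtain ⟨⟨-, -, h3⟩, h1, h2⟩ := hp
    have a1 := le_F hx₁ hx₁' hl₁ (by linarith) hk₁ h1 (by linarith)
    have a2 := le_F hx₂ hx₂' hl₂ (by linarith) hk₂ h2 (by linarith)
    have b1 := F_le hx₁ hx₁' hl₁ (by linarith) h1 (by linarith)
    have b2 := F_le hx₂ hx₂' hl₂ (by linarith) h2 (by linarith)
    have w : 0 ≤ (1 - p.1 - p.2) ^ (-(l₁ * x₁) - l₂ * x₂) := Real.rpow_nonneg (by linarith) _
    have z1 : 0 ≤ (1 - (π * l₁) ^ 2 * x₁) * p.1 ^ (l₁ - 1) :=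
      mul_nonneg (by linarith) (Real.rpow_nonneg h1.le _)
    have z2 : 0 ≤ (1 - (π * l₂) ^ 2 * x₂) * p.2 ^ (l₂ - 1) :=
      mul_nonneg (by linarith) (Real.rpow_nonneg h2.le _)
    unfold dirG psiF
    rw [e]
    constructor
    · calc _ = ((1 - (π * l₁) ^ 2 * x₁) * p.1 ^ (l₁ - 1)) *
            ((1 - (π * l₂) ^ 2 * x₂) * p.2 ^ (l₂ - 1)) *
              (1 - p.1 - p.2) ^ (-(l₁ * x₁) - l₂ * x₂) := by ring
        _ ≤ _ := mul_le_mul_of_nonneg_right (mul_le_mul a1 a2 z2 (z1.trans a1)) w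
    · exact mul_le_mul_of_nonneg_right
        (mul_le_mul b1 b2 (z2.trans a2) (Real.rpow_nonneg h1.le _)) w
  have hf : IntegrableOn (fun p : ℝ × ℝ => psiF x₁ l₁ p.1 * psiF x₂ l₂ p.2 *
        (1 - p.1 - p.2) ^ (-(l₁ * x₁) - l₂ * x₂)) simplexSet := by
    refine Integrable.mono' hg ?_ ?_
    · have m1 := psiF_meas hx₁ hl₁ (by linarith) continuous_fst
        (fun p hp => ⟨hp.1, by linarith [hp.2.1, hp.2.2]⟩)
      have m2 := psiF_meas hx₂ hl₂ (by linarith) continuous_snd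
        (fun p hp => ⟨hp.2.1, by linarith [hp.1, hp.2.2]⟩)
      exact ((m1.mul m2).mul (by fun_prop)).aestronglyMeasurable
    · filter_upwards [key, ae_pos] with p hp hp'
      rw [Real.norm_of_nonneg]
      · exact hp.2
      · refine le_trans ?_ hp.1
        exact mul_nonneg (mul_nonneg (by linarith) (by linarith)) (dirG_nonneg _ _ _ hp'.1)
  constructor
  · rw [← integral_const_mul]
    exact integral_mono_ae (hg.const_mul _) hf (key.mono fun p hp => hp.1)
  · exact integral_mono_ae hf hg (key.mono fun p hp => hp.2)

lemma Psi_eq (x₁ x₂ l₁ l₂ : ℝ) : Psi x₁ x₂ (l₁ * x₁) (l₂ * x₂) =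
    (x₁ * x₂)⁻¹ * (mvBeta (l₁ * x₁) (l₂ * x₂) (1 - l₁ * x₁ - l₂ * x₂))⁻¹ *
    ∫ p in simplexSet, psiF x₁ l₁ p.1 * psiF x₂ l₂ p.2 *
        (1 - p.1 - p.2) ^ (-(l₁ * x₁) - l₂ * x₂) := by
  unfold Psi psiF simplexSet
  congr 2
  ext p
  ring

noncomputable def psiM (l₁ l₂ : ℝ) (p : ℝ × ℝ) : ℝ :=
  Real.Gamma (l₁ + 1) * Real.Gamma (l₂ + 1) / (Real.Gamma (l₁ * p.1 + 1) *
    Real.Gamma (l₂ * p.2 + 1) * Real.Gamma (l₁ + l₂ + (1 - l₁ * p.1 - l₂ * p.2)))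

lemma pref_eq {x₁ x₂ l₁ l₂ : ℝ} (hx₁ : 0 < x₁) (hx₂ : 0 < x₂)
    (hl₁ : 0 < l₁) (hl₂ : 0 < l₂) (hr : l₁ * x₁ + l₂ * x₂ < 1) :
    (x₁ * x₂)⁻¹ * (mvBeta (l₁ * x₁) (l₂ * x₂) (1 - l₁ * x₁ - l₂ * x₂))⁻¹ *
      (∫ p in simplexSet, dirG l₁ l₂ (1 - l₁ * x₁ - l₂ * x₂) p) = psiM l₁ l₂ (x₁, x₂) := by
  have hp1 : 0 < l₁ * x₁ := by positivity
  have hp2 : 0 < l₂ * x₂ := by positivity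
  rw [dir_integral hl₁ hl₂ (by linarith), psiM, mvBeta, Real.Gamma_add_one hl₁.ne',
    Real.Gamma_add_one hl₂.ne', Real.Gamma_add_one hp1.ne', Real.Gamma_add_one hp2.ne']
  have e : l₁ * x₁ + l₂ * x₂ + (1 - l₁ * x₁ - l₂ * x₂) = 1 := by ring
  rw [e, Real.Gamma_one]
  have := (Real.Gamma_pos_of_pos hp1).ne'
  have := (Real.Gamma_pos_of_pos hp2).ne'
  have := (Real.Gamma_pos_of_pos (by linarith : 0 < 1 - l₁ * x₁ - l₂ * x₂)).ne'
  have := (Real.Gamma_pos_of_pos (by linarith : 0 < l₁ + l₂ + (1 - l₁ * x₁ - l₂ * x₂))).ne'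
  simp only [div_one]
  generalize Real.Gamma (l₁ + l₂ + (1 - l₁ * x₁ - l₂ * x₂)) = A at *
  generalize Real.Gamma (1 - l₁ * x₁ - l₂ * x₂) = B at *
  generalize Real.Gamma (l₁ * x₁) = C at *
  generalize Real.Gamma (l₂ * x₂) = D at *
  field_simp

lemma psiM_tendsto {l₁ l₂ : ℝ} (hl₁ : 0 < l₁) (hl₂ : 0 < l₂) :
    Tendsto (psiM l₁ l₂) (𝓝 (0, 0)) (𝓝 ((genBinom (l₁ + l₂) l₁)⁻¹)) := by
  have hG : ∀ y : ℝ, 0 < y → ContinuousAt Real.Gamma y := fun y hy =>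
    (Real.differentiableAt_Gamma (fun m => by
      have : (0:ℝ) ≤ m := Nat.cast_nonneg m
      linarith)).continuousAt
  have hc : ContinuousAt (psiM l₁ l₂) (0, 0) := by
    unfold psiM
    refine ContinuousAt.div continuousAt_const ?_ ?_
    · refine ContinuousAt.mul (ContinuousAt.mul ?_ ?_) ?_
      · exact ContinuousAt.comp (f := fun p : ℝ × ℝ => l₁ * p.1 + 1) (hG _ (by simp)) (by fun_prop)
      · exact ContinuousAt.comp (f := fun p : ℝ × ℝ => l₂ * p.2 + 1) (hG _ (by simp)) (by fun_prop)
      · exact ContinuousAt.comp (f := fun p : ℝ × ℝ => l₁ + l₂ + (1 - l₁ * p.1 - l₂ * p.2))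
          (hG _ (by simp; linarith)) (by fun_prop)
    · have := (Real.Gamma_pos_of_pos (by linarith : 0 < l₁ + l₂ + 1)).ne'
      simpa using this
  have h0 : psiM l₁ l₂ (0, 0) = (genBinom (l₁ + l₂) l₁)⁻¹ := by
    simp [psiM, genBinom]
  rw [← h0]
  exact hc

theorem psi_tendsto_inv_genBinom (lam₁ lam₂ : ℝ) (hlam₁ : 0 < lam₁) (hlam₂ : 0 < lam₂) :
    Tendsto (fun p : ℝ × ℝ => Psi p.1 p.2 (lam₁ * p.1) (lam₂ * p.2))
      (𝓝[{p : ℝ × ℝ | 0 < p.1 ∧ 0 < p.2 ∧ p.1 ≤ 1 ∧ p.2 ≤ 1 ∧ lam₁ * p.1 + lam₂ * p.2 < 1}]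
        (0, 0))
      (𝓝 ((genBinom (lam₁ + lam₂) lam₁)⁻¹)) := by
  have hM := (psiM_tendsto hlam₁ hlam₂).mono_left (nhdsWithin_le_nhds
    (s := {p : ℝ × ℝ | 0 < p.1 ∧ 0 < p.2 ∧ p.1 ≤ 1 ∧ p.2 ≤ 1 ∧ lam₁ * p.1 + lam₂ * p.2 < 1}))
  have hL : Tendsto (fun p : ℝ × ℝ => ((1 - (π * lam₁) ^ 2 * p.1) * (1 - (π * lam₂) ^ 2 * p.2)))
      (𝓝[{p : ℝ × ℝ | 0 < p.1 ∧ 0 < p.2 ∧ p.1 ≤ 1 ∧ p.2 ≤ 1 ∧ lam₁ * p.1 + lam₂ * p.2 < 1}]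
        (0, 0)) (𝓝 1) := by
    refine Tendsto.mono_left ?_ nhdsWithin_le_nhds
    have : Continuous (fun p : ℝ × ℝ =>
      ((1 - (π * lam₁) ^ 2 * p.1) * (1 - (π * lam₂) ^ 2 * p.2))) := by fun_prop
    simpa using this.tendsto (0, 0)
  have hLM := hL.mul hM
  rw [one_mul] at hLM
  have ev : ∀ᶠ p : ℝ × ℝ in
      𝓝[{p : ℝ × ℝ | 0 < p.1 ∧ 0 < p.2 ∧ p.1 ≤ 1 ∧ p.2 ≤ 1 ∧ lam₁ * p.1 + lam₂ * p.2 < 1}] (0, 0),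
      ((1 - (π * lam₁) ^ 2 * p.1) * (1 - (π * lam₂) ^ 2 * p.2)) * psiM lam₁ lam₂ p ≤
        Psi p.1 p.2 (lam₁ * p.1) (lam₂ * p.2) ∧
      Psi p.1 p.2 (lam₁ * p.1) (lam₂ * p.2) ≤ psiM lam₁ lam₂ p := by
    have small : ∀ f : ℝ × ℝ → ℝ, Continuous f → f (0, 0) = 0 → ∀ c : ℝ, 0 < c →
        ∀ᶠ p : ℝ × ℝ in 𝓝[{p : ℝ × ℝ | 0 < p.1 ∧ 0 < p.2 ∧ p.1 ≤ 1 ∧ p.2 ≤ 1 ∧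
          lam₁ * p.1 + lam₂ * p.2 < 1}] (0, 0), f p ≤ c := by
      intro f hf h0 c hc
      have := (hf.tendsto (0, 0)).mono_left (nhdsWithin_le_nhds
        (s := {p : ℝ × ℝ | 0 < p.1 ∧ 0 < p.2 ∧ p.1 ≤ 1 ∧ p.2 ≤ 1 ∧ lam₁ * p.1 + lam₂ * p.2 < 1}))
      rw [h0] at this
      exact this.eventually_le_const hc
    filter_upwards [self_mem_nhdsWithin,
      small (fun p => p.1) (by fun_prop) rfl (1/2) (by norm_num),
      small (fun p => p.2) (by fun_prop) rfl (1/2) (by norm_num),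
      small (fun p => (π * lam₁) ^ 2 * p.1) (by fun_prop) (by simp) 1 one_pos,
      small (fun p => (π * lam₂) ^ 2 * p.2) (by fun_prop) (by simp) 1 one_pos] with p hp a1 a2 b1 b2
    obtain ⟨x₁, x₂⟩ := p
    obtain ⟨h1, h2, -, -, h3⟩ := hp
    simp only at h1 h2 h3 a1 a2 b1 b2 ⊢
    obtain ⟨c1, c2⟩ := psi_integral_bounds h1 a1 h2 a2 hlam₁ hlam₂ h3 b1 b2
    have hpre : 0 ≤ (x₁ * x₂)⁻¹ *
        (mvBeta (lam₁ * x₁) (lam₂ * x₂) (1 - lam₁ * x₁ - lam₂ * x₂))⁻¹ := by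
      have g1 := Real.Gamma_pos_of_pos (mul_pos hlam₁ h1)
      have g2 := Real.Gamma_pos_of_pos (mul_pos hlam₂ h2)
      have g3 := Real.Gamma_pos_of_pos (by linarith : 0 < 1 - lam₁ * x₁ - lam₂ * x₂)
      have e : lam₁ * x₁ + lam₂ * x₂ + (1 - lam₁ * x₁ - lam₂ * x₂) = 1 := by ring
      rw [mvBeta, e, Real.Gamma_one]
      positivity
    rw [Psi_eq, ← pref_eq h1 h2 hlam₁ hlam₂ h3]
    constructor
    · have := mul_le_mul_of_nonneg_left c1 hpre
      refine le_trans (le_of_eq ?_) this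
      ring
    · exact mul_le_mul_of_nonneg_left c2 hpre
  exact tendsto_of_tendsto_of_tendsto_of_le_of_le' hLM hM (ev.mono fun p hp => hp.1)
    (ev.mono fun p hp => hp.2)
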